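/- For every positive integer m ≥ 3: (a) for every polyhedral cone K (of any dimension) with exactly m extreme rays and every K-primitive matrix A, γ(A) ≤ m² − 2m + 2; and (b) there exist a polyhedral cone K with exactly m extreme rays and a K-primitive matrix A with γ(A) = m² − 2m + 2 (for instance K = ℝ^m₊). Hence the maximum of γ(K) over all polyhedral cones with m extreme rays equals m² − 2m + 2. -/

import Mathlib

open Matrix Set Real

noncomputable section

/-- A proper cone in `ℝ^n`: a closed convex cone that is pointed and full. -/
def IsProperCone {n : ℕ} (K : Set (Fin n → ℝ)) : Prop :=
  IsClosed K ∧ (∀ x ∈ K, ∀ y ∈ K, x + y ∈ K) ∧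
    (∀ (c : ℝ), 0 ≤ c → ∀ x ∈ K, c • x ∈ K) ∧
    K ∩ (-K) = {0} ∧ (interior K).Nonempty

/-- The positive hull (cone generated by) finitely many vectors. -/
def ConeGen {n m : ℕ} (y : Fin m → Fin n → ℝ) : Set (Fin n → ℝ) :=
  {x | ∃ c : Fin m → ℝ, (∀ j, 0 ≤ c j) ∧ x = ∑ j, c j • y j}

/-- A polyhedral cone: a proper cone that is the positive hull of finitely many vectors. -/
def IsPolyhedralCone {n : ℕ} (K : Set (Fin n → ℝ)) : Prop :=
  IsProperCone K ∧ ∃ (m : ℕ) (y : Fin m → Fin n → ℝ), K = ConeGen y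

/-- `A` is `K`-nonnegative: `A K ⊆ K`. -/
def KNonneg {n : ℕ} (K : Set (Fin n → ℝ)) (A : Matrix (Fin n) (Fin n) ℝ) : Prop :=
  ∀ x ∈ K, A.mulVec x ∈ K

/-- `A` is `K`-positive: `A` maps `K \ {0}` into the interior of `K`. -/
def KPositive {n : ℕ} (K : Set (Fin n → ℝ)) (A : Matrix (Fin n) (Fin n) ℝ) : Prop :=
  ∀ x ∈ K, x ≠ 0 → A.mulVec x ∈ interior K

/-- `A` is `K`-primitive: `A` is `K`-nonnegative and some power of `A` is `K`-positive. -/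
def KPrimitive {n : ℕ} (K : Set (Fin n → ℝ)) (A : Matrix (Fin n) (Fin n) ℝ) : Prop :=
  KNonneg K A ∧ ∃ k : ℕ, 0 < k ∧ KPositive K (A ^ k)

/-- The exponent `γ(A)` of a `K`-primitive matrix: the least `k ≥ 1` with `A^k` `K`-positive. -/
def expnt {n : ℕ} (K : Set (Fin n → ℝ)) (A : Matrix (Fin n) (Fin n) ℝ) : ℕ :=
  sInf {k : ℕ | 0 < k ∧ KPositive K (A ^ k)}

/-- `x` is an extreme vector of `K`. -/
def IsExtremeVec {n : ℕ} (K : Set (Fin n → ℝ)) (x : Fin n → ℝ) : Prop :=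
  x ∈ K ∧ x ≠ 0 ∧ ∀ y ∈ K, ∀ z ∈ K, x = y + z →
    (∃ a : ℝ, 0 ≤ a ∧ y = a • x) ∧ (∃ b : ℝ, 0 ≤ b ∧ z = b • x)

/-- The set of extreme rays of `K`. -/
def ExtremeRays {n : ℕ} (K : Set (Fin n → ℝ)) : Set (Set (Fin n → ℝ)) :=
  {R | ∃ x, IsExtremeVec K x ∧ R = {y | ∃ c : ℝ, 0 ≤ c ∧ y = c • x}}

/-- `K ∈ P(m,n)`: an `n`-dimensional polyhedral cone in `ℝ^n` with exactly `m` extreme rays.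
(A proper cone in `ℝ^n` has nonempty interior, hence is automatically `n`-dimensional.) -/
def MemP {n : ℕ} (m : ℕ) (K : Set (Fin n → ℝ)) : Prop :=
  IsPolyhedralCone K ∧ (ExtremeRays K).ncard = m

/-- A face of a cone `K`. -/
def IsFace {n : ℕ} (K F : Set (Fin n → ℝ)) : Prop :=
  0 ∈ F ∧ F ⊆ K ∧ (∀ x ∈ F, ∀ y ∈ F, x + y ∈ F) ∧
    (∀ (c : ℝ), 0 ≤ c → ∀ x ∈ F, c • x ∈ F) ∧
    ∀ x ∈ F, ∀ y ∈ K, x - y ∈ K → y ∈ F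

/-- `A` is `K`-irreducible: `A` is `K`-nonnegative and leaves invariant no nontrivial face. -/
def KIrreducible {n : ℕ} (K : Set (Fin n → ℝ)) (A : Matrix (Fin n) (Fin n) ℝ) : Prop :=
  KNonneg K A ∧ ∀ F : Set (Fin n → ℝ), IsFace K F → (∀ x ∈ F, A.mulVec x ∈ F) →
    F = ({0} : Set (Fin n → ℝ)) ∨ F = K

/-- `z` is dominated by a positive multiple of `y` in the order of `K`. -/
def Dom {n : ℕ} (K : Set (Fin n → ℝ)) (z y : Fin n → ℝ) : Prop :=
  ∃ ε : ℝ, 0 < ε ∧ y - ε • z ∈ K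

section PartA

variable {n : ℕ} {K : Set (Fin n → ℝ)} {A : Matrix (Fin n) (Fin n) ℝ}

lemma zero_mem_K (hK : IsProperCone K) : (0 : Fin n → ℝ) ∈ K := by
  have h := hK.2.2.2.1
  have : (0 : Fin n → ℝ) ∈ K ∩ (-K) := by rw [h]; rfl
  exact this.1

lemma pointed (hK : IsProperCone K) {x : Fin n → ℝ} (h1 : x ∈ K) (h2 : -x ∈ K) : x = 0 := by
  have : x ∈ K ∩ (-K) := ⟨h1, h2⟩
  rw [hK.2.2.2.1] at this
  exact this

lemma sum_mem_K (hK : IsProperCone K) {ι : Type*} (s : Finset ι) (f : ι → Fin n → ℝ)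
    (h : ∀ i ∈ s, f i ∈ K) : ∑ i ∈ s, f i ∈ K := by
  classical
  induction s using Finset.induction_on with
  | empty => simpa using zero_mem_K hK
  | insert a s ha ih =>
    rw [Finset.sum_insert ha]
    exact hK.2.1 _ (h a (by simp)) _ (ih (fun i hi => h i (by simp [hi])))

lemma sum_eq_zero_K (hK : IsProperCone K) {ι : Type*} (s : Finset ι) (f : ι → Fin n → ℝ)
    (h : ∀ i ∈ s, f i ∈ K) (h0 : ∑ i ∈ s, f i = 0) : ∀ i ∈ s, f i = 0 := by
  classical
  intro i hi
  apply pointed hK (h i hi)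
  have h1 : -f i = ∑ j ∈ s.erase i, f j := by
    rw [← Finset.add_sum_erase s f hi] at h0
    exact neg_eq_of_add_eq_zero_right h0
  rw [h1]
  exact sum_mem_K hK _ _ (fun j hj => h j (Finset.mem_of_mem_erase hj))

lemma Dom.trans (hK : IsProperCone K) {x y z : Fin n → ℝ} (h1 : Dom K x y) (h2 : Dom K y z) :
    Dom K x z := by
  obtain ⟨a, ha, h1⟩ := h1
  obtain ⟨b, hb, h2⟩ := h2
  refine ⟨b * a, by positivity, ?_⟩
  have := hK.2.1 _ h2 _ (hK.2.2.1 b hb.le _ h1)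
  convert this using 1
  rw [smul_sub, smul_smul]; abel

lemma Dom.refl (hK : IsProperCone K) (x : Fin n → ℝ) : Dom K x x :=
  ⟨1, one_pos, by simpa using zero_mem_K hK⟩

lemma Dom.map (hA : KNonneg K A) {x y : Fin n → ℝ} (h : Dom K x y) :
    Dom K (A *ᵥ x) (A *ᵥ y) := by
  obtain ⟨a, ha, h⟩ := h
  refine ⟨a, ha, ?_⟩
  have := hA _ h
  rwa [Matrix.mulVec_sub, Matrix.mulVec_smul] at this

lemma KNonneg.pow (hA : KNonneg K A) (k : ℕ) : KNonneg K (A ^ k) := by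
  induction k with
  | zero => intro x hx; simpa using hx
  | succ k ih =>
    intro x hx
    rw [pow_succ, ← Matrix.mulVec_mulVec]
    exact ih _ (hA _ hx)

lemma interior_add (hK : IsProperCone K) {x y : Fin n → ℝ} (hx : x ∈ interior K) (hy : y ∈ K) :
    x + y ∈ interior K := by
  have h1 : IsOpen ((fun z => z + y) '' interior K) :=
    (Homeomorph.addRight y).isOpenMap _ isOpen_interior
  apply interior_maximal _ h1 ⟨x, hx, rfl⟩
  rintro _ ⟨z, hz, rfl⟩
  exact hK.2.1 _ (interior_subset hz) _ hy

lemma interior_smul' (hK : IsProperCone K) {x : Fin n → ℝ} {c : ℝ} (hc : 0 < c)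
    (hx : x ∈ interior K) : c • x ∈ interior K := by
  have h1 : IsOpen ((fun z => c • z) '' interior K) :=
    (Homeomorph.smulOfNeZero c hc.ne').isOpenMap _ isOpen_interior
  apply interior_maximal _ h1 ⟨x, hx, rfl⟩
  rintro _ ⟨z, hz, rfl⟩
  exact hK.2.2.1 c hc.le _ (interior_subset hz)

lemma Dom.interior (hK : IsProperCone K) {x y : Fin n → ℝ} (h : Dom K x y)
    (hx : x ∈ interior K) : y ∈ interior K := by
  obtain ⟨a, ha, h⟩ := h
  have := interior_add hK (interior_smul' hK ha hx) h
  simpa using this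

lemma dom_of_interior {x : Fin n → ℝ} (y : Fin n → ℝ) (hx : x ∈ interior K) : Dom K y x := by
  have hc : Continuous (fun ε : ℝ => x - ε • y) := by fun_prop
  have h0 : (fun ε : ℝ => x - ε • y) ⁻¹' (interior K) ∈ nhds (0 : ℝ) :=
    (isOpen_interior.preimage hc).mem_nhds (by simpa using hx)
  obtain ⟨δ, hδ, hb⟩ := Metric.mem_nhds_iff.1 h0
  refine ⟨δ / 2, by positivity, interior_subset (hb ?_)⟩
  simp [abs_of_pos hδ, hδ]

lemma zero_not_interior (hK : IsProperCone K) {x : Fin n → ℝ} (hx : x ∈ K) (h0 : x ≠ 0) :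
    (0 : Fin n → ℝ) ∉ interior K := by
  intro h
  obtain ⟨e, he, h⟩ := dom_of_interior x h
  have h2 := hK.2.2.1 e⁻¹ (by positivity) _ h
  apply h0
  apply pointed hK hx
  rw [zero_sub, smul_neg, smul_smul, inv_mul_cancel₀ he.ne', one_smul] at h2
  exact h2

lemma map_interior (hK : IsProperCone K) (hA : KPrimitive K A) {x u : Fin n → ℝ} (hx : x ∈ K)
    (h0 : x ≠ 0) (hu : u ∈ interior K) : A *ᵥ u ∈ interior K := by
  obtain ⟨hA, k, hk, hp⟩ := hA
  have h1 := hp x hx h0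
  obtain ⟨k, rfl⟩ : ∃ l, k = l + 1 := ⟨k - 1, by omega⟩
  rw [pow_succ', ← Matrix.mulVec_mulVec] at h1
  exact Dom.interior hK (Dom.map hA (dom_of_interior _ hu)) h1

lemma pow_map_interior (hK : IsProperCone K) (hA : KPrimitive K A) {x u : Fin n → ℝ} (hx : x ∈ K)
    (h0 : x ≠ 0) (hu : u ∈ interior K) (k : ℕ) : (A ^ k) *ᵥ u ∈ interior K := by
  induction k with
  | zero => simpa using hu
  | succ k ih =>
    rw [pow_succ', ← Matrix.mulVec_mulVec]
    exact map_interior hK hA hx h0 ih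

lemma KPositive.mono (hK : IsProperCone K) (hA : KPrimitive K A) {k l : ℕ} (hkl : k ≤ l)
    (h : KPositive K (A ^ k)) : KPositive K (A ^ l) := by
  intro x hx h0
  obtain ⟨r, rfl⟩ := Nat.exists_eq_add_of_le' hkl
  rw [pow_add, ← Matrix.mulVec_mulVec]
  exact pow_map_interior hK hA hx h0 (h x hx h0) r

lemma dom_sum (hK : IsProperCone K) {ι : Type*} (s : Finset ι) (f : ι → Fin n → ℝ)
    {z : Fin n → ℝ} (hz : z ∈ K) (h : ∀ i ∈ s, Dom K (f i) z) : Dom K (∑ i ∈ s, f i) z := by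
  classical
  induction s using Finset.induction_on with
  | empty => exact ⟨1, one_pos, by simpa using hz⟩
  | insert a s ha ih =>
    rw [Finset.sum_insert ha]
    obtain ⟨e, he, h1⟩ := h a (by simp)
    obtain ⟨d, hd, h2⟩ := ih (fun i hi => h i (by simp [hi]))
    refine ⟨e * d / (e + d), by positivity, ?_⟩
    have := hK.2.1 _ (hK.2.2.1 (d / (e + d)) (by positivity) _ h1) _
      (hK.2.2.1 (e / (e + d)) (by positivity) _ h2)
    convert this using 1
    ext i
    simp
    field_simp
    ring

lemma dom_smul_left (hK : IsProperCone K) {x z : Fin n → ℝ} {c : ℝ} (hc : 0 < c)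
    (h : Dom K x z) : Dom K (c • x) z := by
  obtain ⟨e, he, h⟩ := h
  refine ⟨e / c, by positivity, ?_⟩
  rw [smul_smul, div_mul_cancel₀ _ hc.ne']
  exact h

variable {M : ℕ} {y : Fin M → Fin n → ℝ}

lemma gen_mem (y : Fin M → Fin n → ℝ) (i : Fin M) : y i ∈ ConeGen y := by
  classical
  refine ⟨Pi.single i 1, fun j => ?_, ?_⟩
  · by_cases h : j = i
    · subst h; simp
    · simp [h]
  · rw [Finset.sum_eq_single i] <;> simp +contextual

lemma dom_gen (hK : IsProperCone K) (hy : K = ConeGen y) (c : Fin M → ℝ) (hc : ∀ j, 0 ≤ c j)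
    {i : Fin M} (hi : 0 < c i) : Dom K (y i) (∑ j, c j • y j) := by
  classical
  refine ⟨c i, hi, ?_⟩
  rw [← Finset.add_sum_erase _ _ (Finset.mem_univ i), add_sub_cancel_left]
  exact sum_mem_K hK _ _ (fun j _ => hK.2.2.1 _ (hc j) _ (hy ▸ gen_mem y j))

/-- If all generators dominated by `w` are dominated by `z` then `w` is dominated by `z`. -/
lemma dom_of_supp (hK : IsProperCone K) (hy : K = ConeGen y) {w z : Fin n → ℝ} (hw : w ∈ K)
    (hz : z ∈ K) (h : ∀ i, Dom K (y i) w → Dom K (y i) z) : Dom K w z := by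
  have hw' := hw
  rw [hy] at hw'
  obtain ⟨c, hc, rfl⟩ := hw'
  apply dom_sum hK _ _ hz
  intro i _
  rcases (hc i).eq_or_lt with h0 | h0
  · exact ⟨1, one_pos, by simpa [← h0] using hz⟩
  · exact dom_smul_left hK h0 (h i (dom_gen hK hy c hc h0))

lemma exists_dom (hK : IsProperCone K) (hy : K = ConeGen y) {w : Fin n → ℝ} (hw : w ∈ K)
    (h0 : w ≠ 0) : ∃ i, Dom K (y i) w := by
  by_contra hcon
  push Not at hcon
  obtain ⟨e, he, h⟩ := dom_of_supp hK hy hw (zero_mem_K hK) (fun i hi => (hcon i hi).elim)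
  apply h0
  have h2 := hK.2.2.1 e⁻¹ (by positivity) _ h
  rw [zero_sub, smul_neg, smul_smul, inv_mul_cancel₀ he.ne', one_smul] at h2
  exact pointed hK hw h2

/-- Closed walk of length `s` at `x`: after `s * (M - 1)` steps we are in the interior. -/
lemma cycle_interior (hK : IsProperCone K) (hy : K = ConeGen y) (hA : KPrimitive K A)
    {x : Fin n → ℝ} (hx : x ∈ K) (h0 : x ≠ 0) {s : ℕ} (hs : 0 < s)
    (h : Dom K x ((A ^ s) *ᵥ x)) : (A ^ (s * (M - 1))) *ᵥ x ∈ interior K := by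
  classical
  have hmem : ∀ k, (A ^ k) *ᵥ x ∈ K := fun k => hA.1.pow k x hx
  have hstep : ∀ k, Dom K ((A ^ (s * k)) *ᵥ x) ((A ^ (s * (k + 1))) *ᵥ x) := by
    intro k
    have := Dom.map (hA.1.pow (s * k)) h
    rwa [Matrix.mulVec_mulVec, ← pow_add] at this
  let S : ℕ → Finset (Fin M) := fun k => Finset.univ.filter
    (fun i => Dom K (y i) ((A ^ (s * k)) *ᵥ x))
  have hmono : ∀ k, S k ⊆ S (k + 1) := by
    intro k i hi
    simp only [S, Finset.mem_filter, Finset.mem_univ, true_and] at hi ⊢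
    exact hi.trans hK (hstep k)
  have hstab : ∀ k, S k = S (k + 1) → (A ^ (s * k)) *ᵥ x ∈ interior K := by
    intro k hk
    have h1 : Dom K ((A ^ (s * (k + 1))) *ᵥ x) ((A ^ (s * k)) *ᵥ x) := by
      apply dom_of_supp hK hy (hmem _) (hmem _)
      intro i hi
      have : i ∈ S (k + 1) := by simpa [S] using hi
      rw [← hk] at this
      simpa [S] using this
    have h2 : ∀ r, Dom K ((A ^ (s * (k + r))) *ᵥ x) ((A ^ (s * k)) *ᵥ x) := by
      intro r
      induction r with
      | zero => exact Dom.refl hK _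
      | succ r ih =>
        refine Dom.trans hK ?_ ih
        have := Dom.map (hA.1.pow (s * r)) h1
        rw [Matrix.mulVec_mulVec, Matrix.mulVec_mulVec, ← pow_add, ← pow_add] at this
        have e1 : s * (k + (r + 1)) = s * r + s * (k + 1) := by ring
        have e2 : s * (k + r) = s * r + s * k := by ring
        rw [e1, e2]
        exact this
    obtain ⟨k0, hk0, hp⟩ := hA.2
    apply (h2 k0).interior hK
    exact KPositive.mono hK hA (by nlinarith) hp x hx h0
  have hcard : ∀ k, (A ^ (s * k)) *ᵥ x ∈ interior K ∨ k + 1 ≤ (S k).card := by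
    intro k
    induction k with
    | zero =>
      right
      obtain ⟨i, hi⟩ := exists_dom hK hy hx h0
      have : i ∈ S 0 := by simpa [S] using hi
      exact Finset.card_pos.2 ⟨i, this⟩
    | succ k ih =>
      rcases ih with ih | ih
      · exact Or.inl ((hstep k).interior hK ih)
      · by_cases he : S k = S (k + 1)
        · exact Or.inl ((hstep k).interior hK (hstab k he))
        · right
          have := Finset.card_lt_card (Finset.ssubset_iff_subset_ne.2 ⟨hmono k, he⟩)
          omega
  rcases hcard (M - 1) with h1 | h1
  · exact h1
  · have huniv : S (M - 1) = Finset.univ := by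
      apply Finset.eq_univ_of_card
      have := (S (M - 1)).card_le_univ
      simp at this ⊢
      omega
    obtain ⟨u, hu⟩ := hK.2.2.2.2
    refine Dom.interior hK (x := u) ?_ hu
    apply dom_of_supp hK hy (interior_subset hu) (hmem _)
    intro i _
    have : i ∈ S (M - 1) := by rw [huniv]; simp
    simpa [S] using this

/-- Minimal generating families. -/
def MinGen (y : Fin M → Fin n → ℝ) : Prop :=
  ∀ (i : Fin M) (c : Fin M → ℝ), (∀ j, 0 ≤ c j) → c i = 0 → y i ≠ ∑ j, c j • y j

lemma exists_minGen (hK : IsPolyhedralCone K) :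
    ∃ (M : ℕ) (y : Fin M → Fin n → ℝ), K = ConeGen y ∧ MinGen y := by
  classical
  have hex := hK.2
  obtain ⟨y, hy⟩ := Nat.find_spec hex
  refine ⟨Nat.find hex, y, hy, ?_⟩
  generalize hM : Nat.find hex = M at y hy
  have hmin : ∀ l < M, ¬ ∃ y : Fin l → Fin n → ℝ, K = ConeGen y := by
    intro l hl; exact Nat.find_min hex (hM ▸ hl)
  clear hM
  intro i c hc hci he
  cases M with
  | zero => exact i.elim0
  | succ M =>
    apply hmin M (by omega)
    refine ⟨fun j => y (i.succAbove j), ?_⟩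
    rw [Fin.sum_univ_succAbove _ i, hci, zero_smul, zero_add] at he
    rw [hy]
    ext x
    constructor
    · rintro ⟨a, ha, rfl⟩
      refine ⟨fun j => a (i.succAbove j) + a i * c (i.succAbove j), fun j => ?_, ?_⟩
      · have := ha (i.succAbove j); have := ha i; have := hc (i.succAbove j); positivity
      · rw [Fin.sum_univ_succAbove _ i, he, Finset.smul_sum, ← Finset.sum_add_distrib]
        refine Finset.sum_congr rfl fun j _ => ?_
        rw [add_smul, smul_smul, add_comm]
    · rintro ⟨a, ha, rfl⟩
      refine ⟨fun j => i.insertNth (α := fun _ => ℝ) 0 a j, fun j => ?_, ?_⟩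
      · refine Fin.succAboveCases i ?_ ?_ j
        · simp
        · intro j; simpa using ha j
      · rw [Fin.sum_univ_succAbove _ i]; simp

lemma minGen_ne_zero (hm : MinGen y) (i : Fin M) : y i ≠ 0 := by
  have := hm i 0 (by simp) rfl
  simpa using this

lemma minGen_not_parallel (hm : MinGen y) {i j : Fin M} (hij : i ≠ j) {c : ℝ} (hc : 0 ≤ c) :
    y i ≠ c • y j := by
  classical
  have := hm i (Pi.single j c) (fun l => by
    by_cases h : l = j
    · subst h; simpa using hc
    · simp [h]) (by simp [hij])
  intro h
  apply this
  rw [Finset.sum_eq_single j] <;> simp +contextual [h]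

lemma minGen_extreme (hK : IsProperCone K) (hy : K = ConeGen y) (hm : MinGen y) (i : Fin M) :
    IsExtremeVec K (y i) := by
  classical
  have hmem : ∀ j, y j ∈ K := fun j => hy ▸ gen_mem y j
  refine ⟨hmem i, minGen_ne_zero hm i, ?_⟩
  intro u hu v hv huv
  rw [hy] at hu hv
  obtain ⟨a, ha, rfl⟩ := hu
  obtain ⟨b, hb, rfl⟩ := hv
  have hsum : y i = (a i + b i) • y i + ∑ j ∈ Finset.univ.erase i, (a j + b j) • y j := by
    rw [Finset.add_sum_erase _ (fun j => (a j + b j) • y j) (Finset.mem_univ i)]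
    rw [huv, ← Finset.sum_add_distrib]
    simp only [add_smul]
  have hge : 1 ≤ a i + b i := by
    by_contra hlt
    push Not at hlt
    set d := 1 - (a i + b i) with hd
    have hd0 : 0 < d := by linarith
    apply hm i (fun j => if j = i then 0 else (a j + b j) / d)
    · intro j
      have := ha j; have := hb j
      split_ifs
      · exact le_rfl
      · positivity
    · simp
    · rw [← Finset.add_sum_erase _ _ (Finset.mem_univ i)]
      have h1 : d • y i = ∑ j ∈ Finset.univ.erase i, (a j + b j) • y j := by
        rw [hd, sub_smul, one_smul, sub_eq_iff_eq_add']
        exact hsum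
      have h2 : y i = d⁻¹ • (d • y i) := by rw [smul_smul, inv_mul_cancel₀ hd0.ne', one_smul]
      rw [h1, Finset.smul_sum] at h2
      simp only [if_true, zero_smul, zero_add]
      refine h2.trans (Finset.sum_congr rfl fun j hj => ?_)
      rw [if_neg (Finset.ne_of_mem_erase hj), smul_smul, div_eq_inv_mul]
  have hz : (a i + b i - 1) • y i + ∑ j ∈ Finset.univ.erase i, (a j + b j) • y j = 0 := by
    rw [sub_smul, one_smul]
    rw [sub_add_eq_add_sub, ← hsum, sub_self]
  have hS : ∑ j ∈ Finset.univ.erase i, (a j + b j) • y j = 0 := by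
    apply pointed hK
    · exact sum_mem_K hK _ _ fun j _ => hK.2.2.1 _ (add_nonneg (ha j) (hb j)) _ (hmem j)
    · rw [← eq_neg_of_add_eq_zero_left hz]
      exact hK.2.2.1 _ (by linarith) _ (hmem i)
  have hj := sum_eq_zero_K hK _ _
    (fun j _ => hK.2.2.1 _ (add_nonneg (ha j) (hb j)) _ (hmem j)) hS
  have hj' : ∀ j ∈ Finset.univ.erase i, a j = 0 ∧ b j = 0 := by
    intro j hjm
    have := (smul_eq_zero.1 (hj j hjm)).resolve_right (minGen_ne_zero hm j)
    have := ha j; have := hb j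
    constructor <;> linarith
  refine ⟨⟨a i, ha i, ?_⟩, ⟨b i, hb i, ?_⟩⟩
  · rw [Finset.sum_eq_single i]
    · intro j _ hji
      rw [(hj' j (by simp [hji])).1, zero_smul]
    · simp
  · rw [Finset.sum_eq_single i]
    · intro j _ hji
      rw [(hj' j (by simp [hji])).2, zero_smul]
    · simp

lemma minGen_card_le (hK : IsProperCone K) (hy : K = ConeGen y) (hm : MinGen y)
    (hfin : (ExtremeRays K).Finite) : M ≤ (ExtremeRays K).ncard := by
  let f : Fin M → Set (Fin n → ℝ) := fun i => {z | ∃ c : ℝ, 0 ≤ c ∧ z = c • y i}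
  have hinj : Function.Injective f := by
    intro i j hij
    by_contra hne
    have : y i ∈ f i := ⟨1, zero_le_one, by simp⟩
    rw [hij] at this
    obtain ⟨c, hc, h⟩ := this
    exact minGen_not_parallel hm hne hc h
  have hr : Set.range f ⊆ ExtremeRays K := by
    rintro _ ⟨i, rfl⟩
    exact ⟨y i, minGen_extreme hK hy hm i, rfl⟩
  have h1 := Set.ncard_le_ncard hr hfin
  rwa [← Set.image_univ, Set.ncard_image_of_injective _ hinj, Set.ncard_univ, Nat.card_fin] at h1

lemma minGen_not_interior (hK : IsProperCone K) (hy : K = ConeGen y) (hm : MinGen y)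
    {i j : Fin M} (hij : i ≠ j) {c : ℝ} : c • y i ∉ interior K := by
  intro h
  have hmem : ∀ j, y j ∈ K := fun j => hy ▸ gen_mem y j
  have hc : 0 < c := by
    by_contra hc
    push Not at hc
    have h1 := interior_add hK h (hK.2.2.1 (-c) (by linarith) _ (hmem i))
    rw [← add_smul] at h1
    simp only [add_neg_cancel, zero_smul] at h1
    exact zero_not_interior hK (hmem i) (minGen_ne_zero hm i) h1
  have h := interior_smul' hK (inv_pos.2 hc) h
  rw [smul_smul, inv_mul_cancel₀ hc.ne', one_smul] at h
  obtain ⟨e, he, h⟩ := dom_of_interior (y j) h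
  obtain ⟨a, ha, h2⟩ := ((minGen_extreme hK hy hm i).2.2 (e • y j)
    (hK.2.2.1 _ he.le _ (hmem j)) _ h (by simp)).1
  apply minGen_not_parallel hm hij.symm (c := e⁻¹ * a) (by positivity)
  rw [← smul_smul, ← h2, smul_smul, inv_mul_cancel₀ he.ne', one_smul]

/-- Every generator reaches, in `t` steps, a closed walk of length `s`, with good bounds. -/
lemma exists_walk (hK : IsProperCone K) (hy : K = ConeGen y) (hmin : MinGen y)
    (hA : KPrimitive K A) {m : ℕ} (hm : 3 ≤ m) (hM : M ≤ m) (j : Fin M) :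
    ∃ (t s : ℕ) (i : Fin M), 0 < s ∧ s ≤ m - 1 ∧ t + s ≤ m ∧
      Dom K (y i) ((A ^ t) *ᵥ y j) ∧ Dom K (y i) ((A ^ s) *ᵥ y i) := by
  classical
  have hmem : ∀ j, y j ∈ K := fun j => hy ▸ gen_mem y j
  have hne : ∀ i, A *ᵥ y i ≠ 0 := by
    intro i h
    obtain ⟨k, hk, hp⟩ := hA.2
    have h1 := hp _ (hmem i) (minGen_ne_zero hmin i)
    obtain ⟨k, rfl⟩ : ∃ l, k = l + 1 := ⟨k - 1, by omega⟩
    rw [pow_succ, ← Matrix.mulVec_mulVec, h, Matrix.mulVec_zero] at h1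
    exact zero_not_interior hK (hmem i) (minGen_ne_zero hmin i) h1
  have hsucc : ∀ i, ∃ l, Dom K (y l) (A *ᵥ y i) := fun i =>
    exists_dom hK hy (hA.1 _ (hmem i)) (hne i)
  choose f hf using hsucc
  have comp : ∀ {a b : ℕ} {i k l : Fin M}, Dom K (y k) ((A ^ a) *ᵥ y i) →
      Dom K (y l) ((A ^ b) *ᵥ y k) → Dom K (y l) ((A ^ (b + a)) *ᵥ y i) := by
    intro a b i k l h1 h2
    rw [pow_add, ← Matrix.mulVec_mulVec]
    exact h2.trans hK (h1.map (hA.1.pow b))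
  have hit : ∀ k i, Dom K (y (f^[k] i)) ((A ^ k) *ᵥ y i) := by
    intro k i
    induction k with
    | zero => simpa using Dom.refl hK _
    | succ k ih =>
      rw [Function.iterate_succ_apply', add_comm]
      exact comp ih (by simpa using hf _)
  -- main dichotomy
  have hM0 : 0 < M := Fin.pos j
  by_cases hrep : ∃ a b : ℕ, a < b ∧ b ≤ m ∧ b - a ≤ m - 1 ∧ f^[a] j = f^[b] j
  · obtain ⟨a, b, hab, hbm, hd, he⟩ := hrep
    refine ⟨a, b - a, f^[a] j, by omega, hd, by omega, hit a j, ?_⟩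
    have := hit (b - a) (f^[a] j)
    rwa [← Function.iterate_add_apply, Nat.sub_add_cancel hab.le, ← he] at this
  · -- all of `j, f j, ..., f^(m-1) j` are distinct
    have hinj : ∀ a b : ℕ, a < b → b < m → f^[a] j ≠ f^[b] j := by
      intro a b hab hb he
      exact hrep ⟨a, b, hab, hb.le, by omega, he⟩
    let g : Fin m → Fin M := fun a => f^[a] j
    have hg : Function.Injective g := by
      intro a b hab
      rcases lt_trichotomy a.1 b.1 with h | h | h
      · exact (hinj _ _ h b.2 hab).elim
      · exact Fin.ext h
      · exact (hinj _ _ h a.2 hab.symm).elim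
    have hMm : M = m := by
      have := Fintype.card_le_of_injective g hg
      simp at this
      omega
    subst hMm
    have hgs : Function.Surjective g := Finite.injective_iff_surjective.1 hg
    have hper : f^[M] j = j := by
      obtain ⟨a, ha⟩ := hgs (f^[M] j)
      rcases Nat.eq_zero_or_pos a.1 with h | h
      · simp only [g, h] at ha; exact ha.symm
      · exact (hrep ⟨a, M, a.2, le_rfl, by omega, ha⟩).elim
    by_cases hone : ∀ i l, Dom K (y l) (A *ᵥ y i) → l = f i
    · exfalso
      have h1 : ∀ i, ∃ c : ℝ, A *ᵥ y i = c • y (f i) := by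
        intro i
        have h2 := hA.1 _ (hmem i)
        have h3 := h2
        rw [hy] at h3
        obtain ⟨c, hc, h3⟩ := h3
        refine ⟨c (f i), ?_⟩
        rw [h3, Finset.sum_eq_single (f i)]
        · intro l _ hl
          rcases (hc l).eq_or_lt with h0 | h0
          · rw [← h0, zero_smul]
          · exact (hl (hone i l (h3 ▸ dom_gen hK hy c hc h0))).elim
        · simp
      have h2 : ∀ k, ∃ c : ℝ, (A ^ k) *ᵥ y j = c • y (f^[k] j) := by
        intro k
        induction k with
        | zero => exact ⟨1, by simp⟩
        | succ k ih =>
          obtain ⟨c, hc⟩ := ih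
          obtain ⟨d, hd⟩ := h1 (f^[k] j)
          refine ⟨c * d, ?_⟩
          rw [pow_succ', ← Matrix.mulVec_mulVec, hc, Matrix.mulVec_smul, hd, smul_smul,
            Function.iterate_succ_apply']
      obtain ⟨k, hk, hp⟩ := hA.2
      have h3 := hp _ (hmem j) (minGen_ne_zero hmin j)
      obtain ⟨c, hc⟩ := h2 k
      rw [hc] at h3
      have : ∃ l, f^[k] j ≠ l := by
        by_cases h : f^[k] j = ⟨0, by omega⟩
        · exact ⟨⟨1, by omega⟩, by rw [h]; simp⟩
        · exact ⟨_, h⟩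
      obtain ⟨l, hl⟩ := this
      exact minGen_not_interior hK hy hmin hl h3
    · push Not at hone
      obtain ⟨i, l, hil, hne'⟩ := hone
      obtain ⟨p, rfl⟩ := hgs i
      obtain ⟨q, rfl⟩ := hgs l
      have hil1 : Dom K (y (g q)) ((A ^ 1) *ᵥ y (g p)) := by simpa using hil
      have hpq : (q : ℕ) ≠ p + 1 := by
        intro h
        apply hne'
        simp only [g, h]
        rw [Function.iterate_succ_apply']
      have hpq2 : ¬ ((q : ℕ) = 0 ∧ (p : ℕ) + 1 = M) := by
        rintro ⟨h1, h2⟩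
        apply hne'
        simp only [g, h1]
        rw [← Function.iterate_succ_apply' f, Nat.succ_eq_add_one, h2, hper]
        rfl
      have hp2 := p.2
      have hq2 := q.2
      rcases Nat.lt_or_ge p q with h | h
      · refine ⟨0, (M - q) + (1 + p), j, by omega, by omega, by omega, ?_, ?_⟩
        · simpa using Dom.refl hK _
        · apply comp (comp (hit p j) hil1)
          have := hit (M - q) (f^[q] j)
          rw [← Function.iterate_add_apply, Nat.sub_add_cancel hq2.le, hper] at this
          exact this
      · refine ⟨q, 1 + (p - q), g q, by omega, by omega, by omega, hit q j, ?_⟩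
        refine comp ?_ hil1
        have := hit (p - q) (f^[q] j)
        rw [← Function.iterate_add_apply, Nat.sub_add_cancel h] at this
        exact this

lemma partA {m : ℕ} (hm : 3 ≤ m) (hK : IsPolyhedralCone K) (hcard : (ExtremeRays K).ncard = m)
    (hA : KPrimitive K A) : expnt K A ≤ m ^ 2 - 2 * m + 2 := by
  obtain ⟨M, y, hy, hmin⟩ := exists_minGen hK
  replace hK := hK.1
  have hM : M ≤ m := by
    rw [← hcard]
    exact minGen_card_le hK hy hmin (Set.finite_of_ncard_pos (by omega))
  have hmem : ∀ j, y j ∈ K := fun j => hy ▸ gen_mem y j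
  apply Nat.sInf_le
  refine ⟨by omega, ?_⟩
  intro x hx h0
  obtain ⟨j, hj⟩ := exists_dom hK hy hx h0
  refine (hj.map (hA.1.pow _)).interior hK ?_
  obtain ⟨t, s, i, hs, hsm, hts, h1, h2⟩ := exists_walk hK hy hmin hA hm hM j
  have hi := cycle_interior hK hy hA (hmem i) (minGen_ne_zero hmin i) hs h2
  have hle : s * (M - 1) + t ≤ m ^ 2 - 2 * m + 2 := by
    obtain ⟨m, rfl⟩ : ∃ l, m = l + 3 := ⟨m - 3, by omega⟩
    have e1 : (m + 3) ^ 2 - 2 * (m + 3) + 2 = m ^ 2 + 4 * m + 5 := by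
      have : (m + 3) ^ 2 = (m ^ 2 + 4 * m + 3) + 2 * (m + 3) := by ring
      rw [this, Nat.add_sub_cancel]
    rw [e1]
    have h3 : s * (M - 1) ≤ s * (m + 2) := Nat.mul_le_mul_left _ (by omega)
    have h4 : s * (m + 1) ≤ (m + 2) * (m + 1) := Nat.mul_le_mul_right _ (by omega)
    nlinarith
  obtain ⟨r, hr⟩ := Nat.exists_eq_add_of_le' hle
  rw [hr, pow_add, ← Matrix.mulVec_mulVec]
  refine pow_map_interior hK hA hx h0 ?_ r
  rw [pow_add, ← Matrix.mulVec_mulVec]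
  exact (h1.map (hA.1.pow _)).interior hK hi

end PartA

section PartB

/-- The nonnegative orthant. -/
def Orth (m : ℕ) : Set (Fin m → ℝ) := {x | ∀ i, 0 ≤ x i}

lemma orth_eq_pi (m : ℕ) : Orth m = Set.pi Set.univ (fun _ => Set.Ici (0 : ℝ)) := by
  ext x; simp [Orth, Set.mem_pi, Pi.le_def]

lemma orth_interior (m : ℕ) : interior (Orth m) = {x | ∀ i, 0 < x i} := by
  rw [orth_eq_pi, interior_pi_set Set.finite_univ]
  ext x; simp

lemma orth_poly (m : ℕ) : IsPolyhedralCone (Orth m) := by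
  classical
  refine ⟨⟨?_, ?_, ?_, ?_, ?_⟩, m, fun i => Pi.single i 1, ?_⟩
  · rw [orth_eq_pi]; exact isClosed_set_pi (fun _ _ => isClosed_Ici)
  · intro x hx y hy i; exact add_nonneg (hx i) (hy i)
  · intro c hc x hx i; exact mul_nonneg hc (hx i)
  · ext x
    constructor
    · rintro ⟨h1, h2⟩
      have h2' : ∀ i, 0 ≤ (-x) i := h2
      rw [Set.mem_singleton_iff]
      ext i
      have := h1 i; have := h2' i
      simp at *
      linarith
    · rintro rfl
      exact ⟨fun i => le_rfl, fun i => by simp⟩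
  · rw [orth_interior]; exact ⟨fun _ => 1, fun _ => one_pos⟩
  · ext x
    constructor
    · intro hx
      exact ⟨x, hx, (pi_eq_sum_univ' x).trans (by
        refine Finset.sum_congr rfl fun i _ => ?_
        congr 1)⟩
    · rintro ⟨c, hc, rfl⟩ i
      simp [Finset.sum_apply, Pi.single_apply, hc]

lemma orth_extreme {m : ℕ} (i : Fin m) : IsExtremeVec (Orth m) (Pi.single i 1) := by
  classical
  have key : ∀ u ∈ Orth m, ∀ v ∈ Orth m, (Pi.single i 1 : Fin m → ℝ) = u + v →
      ∃ a : ℝ, 0 ≤ a ∧ u = a • (Pi.single i 1 : Fin m → ℝ) := by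
    intro u hu v hv h
    refine ⟨u i, hu i, ?_⟩
    ext j
    by_cases hj : j = i
    · subst hj; simp
    · have h1 := congrFun h j
      have := hu j; have := hv j
      simp [hj] at h1 ⊢
      linarith
  refine ⟨fun j => ?_, ?_, ?_⟩
  · by_cases hj : j = i
    · subst hj; simp
    · simp [hj]
  · simp
  · intro u hu v hv h
    exact ⟨key u hu v hv h, key v hv u hu (by rw [h, add_comm])⟩

lemma orth_extreme_iff {m : ℕ} {x : Fin m → ℝ} (hx : IsExtremeVec (Orth m) x) :
    ∃ (i : Fin m) (c : ℝ), 0 < c ∧ x = c • (Pi.single i 1 : Fin m → ℝ) := by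
  classical
  obtain ⟨hK, h0, h⟩ := hx
  obtain ⟨i, hi⟩ : ∃ i, x i ≠ 0 := by
    by_contra hcon
    push Not at hcon
    exact h0 (funext hcon)
  have hpos : 0 < x i := lt_of_le_of_ne (hK i) (Ne.symm hi)
  refine ⟨i, x i, hpos, ?_⟩
  obtain ⟨⟨a, ha, h1⟩, _⟩ := h (x i • Pi.single i 1) (by
      intro j
      by_cases hj : j = i
      · subst hj; simpa using hpos.le
      · simp [hj]) (x - x i • Pi.single i 1) (by
      intro j
      by_cases hj : j = i
      · subst hj; simp
      · simpa [hj] using hK j) (by simp)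
  have h2 := congrFun h1 i
  simp at h2
  have ha1 : a = 1 := by
    have : (a - 1) * x i = 0 := by linarith
    rcases mul_eq_zero.1 this with h | h
    · linarith
    · exact (hi h).elim
  rw [ha1, one_smul] at h1
  exact h1.symm

lemma orth_ncard (m : ℕ) : (ExtremeRays (Orth m)).ncard = m := by
  classical
  let f : Fin m → Set (Fin m → ℝ) :=
    fun i => {z | ∃ c : ℝ, 0 ≤ c ∧ z = c • (Pi.single i 1 : Fin m → ℝ)}
  have hinj : Function.Injective f := by
    intro i j hij
    by_contra hne
    have : (Pi.single i 1 : Fin m → ℝ) ∈ f i := ⟨1, zero_le_one, by simp⟩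
    rw [hij] at this
    obtain ⟨c, hc, h⟩ := this
    have := congrFun h i
    simp [hne] at this
  have hr : ExtremeRays (Orth m) = Set.range f := by
    ext R
    constructor
    · rintro ⟨x, hx, rfl⟩
      obtain ⟨i, c, hc, rfl⟩ := orth_extreme_iff hx
      refine ⟨i, ?_⟩
      ext z
      constructor
      · rintro ⟨d, hd, rfl⟩
        refine ⟨d / c, by positivity, ?_⟩
        rw [smul_smul, div_mul_cancel₀ _ hc.ne']
      · rintro ⟨d, hd, rfl⟩
        exact ⟨d * c, by positivity, by rw [smul_smul]⟩
    · rintro ⟨i, rfl⟩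
      exact ⟨_, orth_extreme i, rfl⟩
  rw [hr, ← Set.image_univ, Set.ncard_image_of_injective _ hinj, Set.ncard_univ, Nat.card_fin]

/-- Arcs of the Wielandt digraph; `WArc m i j` is the arc from `j` to `i`. -/
def WArc (m i j : ℕ) : Prop := i = j + 1 ∨ (j + 1 = m ∧ (i = 0 ∨ i = 1))

open Classical in
/-- The Wielandt matrix. -/
def Wiel (m : ℕ) : Matrix (Fin m) (Fin m) ℝ :=
  Matrix.of fun i j => if WArc m i j then 1 else 0

lemma wiel_pow_nonneg (m k : ℕ) : ∀ i j, 0 ≤ (Wiel m ^ k) i j := by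
  induction k with
  | zero => intro i j; simp only [pow_zero, Matrix.one_apply]; split_ifs <;> simp
  | succ k ih =>
    intro i j
    rw [pow_succ, Matrix.mul_apply]
    refine Finset.sum_nonneg fun l _ => mul_nonneg (ih i l) ?_
    simp only [Wiel, Matrix.of_apply]
    split_ifs <;> simp

lemma wiel_comp {m a b : ℕ} {i l j : Fin m} (h1 : 0 < (Wiel m ^ a) i l)
    (h2 : 0 < (Wiel m ^ b) l j) : 0 < (Wiel m ^ (a + b)) i j := by
  rw [pow_add, Matrix.mul_apply]
  refine Finset.sum_pos' (fun x _ => mul_nonneg (wiel_pow_nonneg _ _ _ _)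
    (wiel_pow_nonneg _ _ _ _)) ⟨l, Finset.mem_univ _, mul_pos h1 h2⟩

lemma wiel_arc {m : ℕ} {i j : Fin m} (h : WArc m i j) : 0 < (Wiel m ^ 1) i j := by
  simp [Wiel, h]

lemma wiel_path {m : ℕ} (d : ℕ) : ∀ (i j : Fin m), (i : ℕ) = j + d → 0 < (Wiel m ^ d) i j := by
  induction d with
  | zero =>
    intro i j h
    have : i = j := Fin.ext h
    subst this; simp
  | succ d ih =>
    intro i j h
    have hi := i.2
    have h1 := ih ⟨j + d, by omega⟩ j rfl
    have h2 : WArc m i (j + d) := Or.inl h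
    have := wiel_comp (wiel_arc (i := i) (j := ⟨j + d, by omega⟩) h2) h1
    rwa [add_comm] at this

lemma wiel_loops {m : ℕ} (hm : 3 ≤ m) (a b : ℕ) :
    0 < (Wiel m ^ (a * m + b * (m - 1))) ⟨m - 1, by omega⟩ ⟨m - 1, by omega⟩ := by
  have hm1 : m - 1 < m := by omega
  have ha : 0 < (Wiel m ^ m) ⟨m - 1, hm1⟩ ⟨m - 1, hm1⟩ := by
    have h1 := wiel_arc (m := m) (i := ⟨0, by omega⟩) (j := ⟨m - 1, hm1⟩)
      (Or.inr ⟨by simp; omega, Or.inl rfl⟩)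
    have h2 := wiel_path (m := m) (m - 1) ⟨m - 1, hm1⟩ ⟨0, by omega⟩ (by simp)
    have := wiel_comp h2 h1
    rwa [Nat.sub_add_cancel (by omega)] at this
  have hb : 0 < (Wiel m ^ (m - 1)) ⟨m - 1, hm1⟩ ⟨m - 1, hm1⟩ := by
    have h1 := wiel_arc (m := m) (i := ⟨1, by omega⟩) (j := ⟨m - 1, hm1⟩)
      (Or.inr ⟨by simp; omega, Or.inr rfl⟩)
    have h2 := wiel_path (m := m) (m - 2) ⟨m - 1, hm1⟩ ⟨1, by omega⟩ (by simp; omega)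
    have := wiel_comp h2 h1
    have e : m - 2 + 1 = m - 1 := by omega
    rwa [e] at this
  have hb' : 0 < (Wiel m ^ (b * (m - 1))) ⟨m - 1, hm1⟩ ⟨m - 1, hm1⟩ := by
    induction b with
    | zero => simp
    | succ b ih => rw [Nat.succ_mul]; exact wiel_comp ih hb
  induction a with
  | zero => simpa using hb'
  | succ a ih =>
    have e : (a + 1) * m + b * (m - 1) = m + (a * m + b * (m - 1)) := by ring
    rw [e]
    exact wiel_comp ha ih

lemma frob {m : ℕ} (hm : 3 ≤ m) (L : ℕ) (hL : m * (m - 1) ≤ L) :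
    ∃ a b, L = a * m + b * (m - 1) := by
  obtain ⟨p, rfl⟩ : ∃ p, m = p + 1 := ⟨m - 1, by omega⟩
  simp only [Nat.add_sub_cancel] at *
  have hp : 0 < p := by omega
  have h1 := Nat.div_add_mod L p
  have h2 := Nat.mod_lt L hp
  have h3 : p + 1 ≤ L / p := (Nat.le_div_iff_mul_le hp).2 hL
  obtain ⟨r, hr⟩ := Nat.exists_eq_add_of_le (show L % p ≤ L / p by omega)
  refine ⟨L % p, r, ?_⟩
  rw [hr] at h1
  nlinarith

lemma wiel_pos {m : ℕ} (hm : 3 ≤ m) (i j : Fin m) :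
    0 < (Wiel m ^ (m * (m - 1) + 2 * m)) i j := by
  have hm1 : m - 1 < m := by omega
  have hi := i.2
  have hj := j.2
  have h1 := wiel_path (m := m) (m - 1 - j) ⟨m - 1, hm1⟩ j (by simp; omega)
  have h2 := wiel_arc (m := m) (i := ⟨0, by omega⟩) (j := ⟨m - 1, hm1⟩)
      (Or.inr ⟨by simp; omega, Or.inl rfl⟩)
  have h3 := wiel_path (m := m) i i ⟨0, by omega⟩ (by simp)
  obtain ⟨a, b, hab⟩ := frob hm (m * (m - 1) + j + (m - i)) (by omega)
  have h4 := wiel_loops hm a b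
  rw [← hab] at h4
  have h5 := wiel_comp h3 (wiel_comp h2 (wiel_comp h4 h1))
  have e : (i : ℕ) + (1 + (m * (m - 1) + j + (m - i) + (m - 1 - j))) = m * (m - 1) + 2 * m := by
    omega
  rwa [e] at h5

lemma wiel_supp {m : ℕ} (hm : 3 ≤ m) (k : ℕ) : ∀ i : Fin m,
    (Wiel m ^ k) i ⟨0, by omega⟩ ≠ 0 →
    ∃ a b, k = i + a * m + b * (m - 1) ∧ ((i : ℕ) = 0 → k = 0 ∨ 1 ≤ a) := by
  induction k with
  | zero =>
    intro i h
    have : i = ⟨0, by omega⟩ := by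
      by_contra hne
      simp [Matrix.one_apply, hne] at h
    subst this
    exact ⟨0, 0, by simp, by simp⟩
  | succ k ih =>
    intro i h
    rw [pow_succ', Matrix.mul_apply] at h
    obtain ⟨l, _, hl⟩ := Finset.exists_ne_zero_of_sum_ne_zero h
    obtain ⟨a, b, hk, h0⟩ := ih l (right_ne_zero_of_mul hl)
    have harc : WArc m i l := by
      by_contra hn
      exact left_ne_zero_of_mul hl (by simp [Wiel, hn])
    rcases harc with h1 | ⟨h1, h2 | h2⟩
    · exact ⟨a, b, by omega, by omega⟩
    · refine ⟨a + 1, b, ?_, by omega⟩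
      rw [Nat.succ_mul]; omega
    · refine ⟨a, b + 1, ?_, by omega⟩
      rw [Nat.succ_mul]; omega

lemma wiel_zero {m : ℕ} (hm : 3 ≤ m) :
    (Wiel m ^ ((m - 1) ^ 2)) ⟨0, by omega⟩ ⟨0, by omega⟩ = 0 := by
  by_contra h
  obtain ⟨a, b, hk, h0⟩ := wiel_supp hm _ _ h
  obtain ⟨p, rfl⟩ : ∃ p, m = p + 1 := ⟨m - 1, by omega⟩
  simp only [Nat.add_sub_cancel, zero_add] at *
  have hp : 2 ≤ p := by omega
  have ha : 1 ≤ a := by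
    rcases h0 trivial with h | h
    · nlinarith
    · exact h
  have hdvd : p ∣ a := by
    have h1 : p ∣ a + (a + b) * p := ⟨p, by nlinarith⟩
    exact (Nat.dvd_add_left (Dvd.intro_left _ rfl)).1 h1
  have := Nat.le_of_dvd ha hdvd
  nlinarith

lemma orth_nonneg {m : ℕ} {A : Matrix (Fin m) (Fin m) ℝ} (h : ∀ i j, 0 ≤ A i j) :
    KNonneg (Orth m) A := by
  intro x hx i
  rw [Matrix.mulVec, dotProduct]
  exact Finset.sum_nonneg fun j _ => mul_nonneg (h i j) (hx j)

lemma wiel_primitive {m : ℕ} (hm : 3 ≤ m) : KPrimitive (Orth m) (Wiel m) := by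
  refine ⟨orth_nonneg (by simpa using wiel_pow_nonneg m 1), m * (m - 1) + 2 * m, by omega, ?_⟩
  intro x hx h0
  rw [orth_interior]
  intro i
  obtain ⟨j, hj⟩ : ∃ i, x i ≠ 0 := by
    by_contra hcon
    push Not at hcon
    exact h0 (funext hcon)
  exact Finset.sum_pos' (fun l _ => mul_nonneg (wiel_pos hm i l).le (hx l))
    ⟨j, Finset.mem_univ _, mul_pos (wiel_pos hm i j) (lt_of_le_of_ne (hx j) (Ne.symm hj))⟩

lemma partB {m : ℕ} (hm : 3 ≤ m) : expnt (Orth m) (Wiel m) = m ^ 2 - 2 * m + 2 := by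
  classical
  have hP := wiel_primitive hm
  apply le_antisymm (partA hm (orth_poly m) (orth_ncard m) hP)
  have hmem : expnt (Orth m) (Wiel m) ∈ {k : ℕ | 0 < k ∧ KPositive (Orth m) (Wiel m ^ k)} :=
    Nat.sInf_mem hP.2
  obtain ⟨_, hpos⟩ := hmem
  have e : m ^ 2 - 2 * m + 2 = (m - 1) ^ 2 + 1 := by
    obtain ⟨p, rfl⟩ : ∃ p, m = p + 1 := ⟨m - 1, by omega⟩
    obtain ⟨q, rfl⟩ : ∃ q, p = q + 1 := ⟨p - 1, by omega⟩
    have : (q + 1 + 1) ^ 2 = (q ^ 2 + 2 * q) + 2 * (q + 1 + 1) := by ring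
    rw [this, Nat.add_sub_cancel, Nat.add_sub_cancel]; ring
  rw [e]
  by_contra hlt
  have h1 := KPositive.mono (orth_poly m).1 hP (l := (m - 1) ^ 2) (by omega) hpos
  have h2 := h1 (Pi.single ⟨0, by omega⟩ 1) (orth_extreme _).1 (orth_extreme _).2.1
  rw [orth_interior] at h2
  have h3 := h2 ⟨0, by omega⟩
  simp [Matrix.mulVec_single_one, wiel_zero hm] at h3

end PartB

/-- For each `m ≥ 3`: (a) every `K`-primitive matrix on a polyhedral cone (of any dimension)
with exactly `m` extreme rays has exponent at most `m² - 2m + 2`; (b) this bound is attained.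
Hence the maximum of `γ(K)` over all polyhedral cones with `m` extreme rays is `m² - 2m + 2`. -/
theorem stmt_3 (m : ℕ) (hm : 3 ≤ m) :
    (∀ (n : ℕ) (K : Set (Fin n → ℝ)) (A : Matrix (Fin n) (Fin n) ℝ),
      IsPolyhedralCone K → (ExtremeRays K).ncard = m → KPrimitive K A →
      expnt K A ≤ m ^ 2 - 2 * m + 2) ∧
    (∃ (n : ℕ) (K : Set (Fin n → ℝ)) (A : Matrix (Fin n) (Fin n) ℝ),
      IsPolyhedralCone K ∧ (ExtremeRays K).ncard = m ∧ KPrimitive K A ∧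
      expnt K A = m ^ 2 - 2 * m + 2) := by
  exact ⟨fun n K A hK hc hA => partA hm hK hc hA,
    m, Orth m, Wiel m, orth_poly m, orth_ncard m, wiel_primitive hm, partB hm⟩
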